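/- Let ρ_AB be a density matrix on ℂ^{d_A} ⊗ ℂ^{d_B} with ρ_B positive definite, and let {|k⟩}_{k=1}^{d_A} be any orthonormal basis of ℂ^{d_A}. Then the pretty-good guessing probability dominates the pretty-good singlet fraction: Σ_{k=1}^{d_A} Tr[ρ_B^{−1/2} ρ_B^{k} ρ_B^{−1/2} ρ_B^{k}] ≥ (1/d_A) · Tr[ρ̃_AB²], where ρ_B^{k} = Tr_A[(|k⟩⟨k| ⊗ I_B) ρ_AB]. -/

import Mathlib

open Matrix BigOperators ComplexOrder Kronecker

noncomputable section

/-- Partial trace over the first (A) tensor factor. -/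
def ptraceA {dA dB : ℕ} (ρ : Matrix (Fin dA × Fin dB) (Fin dA × Fin dB) ℂ) :
    Matrix (Fin dB) (Fin dB) ℂ :=
  Matrix.of fun i j => ∑ a : Fin dA, ρ (a, i) (a, j)

/-- `ρ_B^v = Tr_A[(|v⟩⟨v| ⊗ I_B) ρ]`. -/
def condB {dA dB : ℕ} (ρ : Matrix (Fin dA × Fin dB) (Fin dA × Fin dB) ℂ)
    (v : Fin dA → ℂ) : Matrix (Fin dB) (Fin dB) ℂ :=
  ptraceA (((vecMulVec v (star v)) ⊗ₖ (1 : Matrix (Fin dB) (Fin dB) ℂ)) * ρ)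

/-- Real power of a Hermitian matrix, via the spectral decomposition (junk value `0`
on non-Hermitian matrices). -/
def mpow {n : Type*} [Fintype n] [DecidableEq n] (M : Matrix n n ℂ) (r : ℝ) :
    Matrix n n ℂ :=
  if h : M.IsHermitian then
    (h.eigenvectorUnitary : Matrix n n ℂ) *
      Matrix.diagonal (fun i => ((h.eigenvalues i ^ r : ℝ) : ℂ)) *
      star (h.eigenvectorUnitary : Matrix n n ℂ)
  else 0

/-- `ρ̃_AB = (I_A ⊗ ρ_B^{-1/4}) ρ_AB (I_A ⊗ ρ_B^{-1/4})`. -/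
def tildeRho {dA dB : ℕ} (ρ : Matrix (Fin dA × Fin dB) (Fin dA × Fin dB) ℂ) :
    Matrix (Fin dA × Fin dB) (Fin dA × Fin dB) ℂ :=
  ((1 : Matrix (Fin dA) (Fin dA) ℂ) ⊗ₖ mpow (ptraceA ρ) (-(1/4 : ℝ))) * ρ *
    ((1 : Matrix (Fin dA) (Fin dA) ℂ) ⊗ₖ mpow (ptraceA ρ) (-(1/4 : ℝ)))

/-- The pretty-good guessing probability term for a single basis vector `v`:
`Tr[ρ_B^{-1/2} ρ_B^v ρ_B^{-1/2} ρ_B^v]`. -/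
def pgTerm {dA dB : ℕ} (ρ : Matrix (Fin dA × Fin dB) (Fin dA × Fin dB) ℂ)
    (v : Fin dA → ℂ) : ℂ :=
  (mpow (ptraceA ρ) (-(1/2 : ℝ)) * condB ρ v * mpow (ptraceA ρ) (-(1/2 : ℝ)) *
    condB ρ v).trace

end

noncomputable section

/-!
Put `P k = |v k⟩⟨v k| ⊗ I` and `σ = tildeRho ρ`. Since `P k * σ * P k = |v k⟩⟨v k| ⊗ condB σ (v k)`,
taking the trace against `σ` gives `Tr[P k σ P k σ] = Tr[(condB σ (v k))²]`, which is
`pgTerm ρ (v k)`. Factoring `σ = Mᴴ * M` shows that `Tr[Xᴴ σ X σ] = ‖M X Mᴴ‖²` is the square of a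
seminorm in `X`, so by the triangle inequality and Cauchy–Schwarz its value at `∑ k, P k = 1`,
namely `Tr[σ²]`, is at most the number of summands times the sum of its values at the `P k`.
-/

section HilbertSchmidt

open scoped Matrix.Norms.Frobenius MatrixOrder

variable {ι m n 𝕜 : Type*} [Fintype m] [Fintype n] [RCLike 𝕜]

theorem norm_sum_sq_le_card_mul_sum_norm_sq {E : Type*} [SeminormedAddCommGroup E]
    (s : Finset ι) (f : ι → E) : ‖∑ i ∈ s, f i‖ ^ 2 ≤ s.card * ∑ i ∈ s, ‖f i‖ ^ 2 :=
  calc ‖∑ i ∈ s, f i‖ ^ 2 ≤ (∑ i ∈ s, ‖f i‖) ^ 2 := by gcongr; exact norm_sum_le s f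
    _ ≤ s.card * ∑ i ∈ s, ‖f i‖ ^ 2 := sq_sum_le_card_mul_sum_sq

theorem frobenius_norm_sq_eq_re_trace (A : Matrix m n 𝕜) :
    ‖A‖ ^ 2 = RCLike.re (Aᴴ * A).trace := by
  rw [frobenius_norm_def, ← Real.sqrt_eq_rpow, Real.sq_sqrt (by positivity), Finset.sum_comm]
  simp only [trace, diag, mul_apply, conjTranspose_apply, map_sum, Real.rpow_two,
    RCLike.star_def, RCLike.conj_mul, ← RCLike.ofReal_pow, RCLike.ofReal_re]

theorem re_trace_conjTranspose_sum_mul_le_card_mul {A : Matrix m m 𝕜} {B : Matrix n n 𝕜}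
    (hA : A.PosSemidef) (hB : B.PosSemidef) (s : Finset ι) (X : ι → Matrix m n 𝕜) :
    RCLike.re ((∑ i ∈ s, X i)ᴴ * A * (∑ i ∈ s, X i) * B).trace ≤
      s.card * ∑ i ∈ s, RCLike.re ((X i)ᴴ * A * X i * B).trace := by
  classical
  obtain ⟨M, rfl⟩ := CStarAlgebra.nonneg_iff_eq_star_mul_self.mp hA.nonneg
  obtain ⟨N, rfl⟩ := CStarAlgebra.nonneg_iff_eq_star_mul_self.mp hB.nonneg
  have re_trace_eq (Y : Matrix m n 𝕜) :
      RCLike.re (Yᴴ * (star M * M) * Y * (star N * N)).trace = ‖M * Y * Nᴴ‖ ^ 2 := by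
    rw [frobenius_norm_sq_eq_re_trace, ← Matrix.mul_assoc _ (star N), trace_mul_comm]
    simp only [conjTranspose_mul, conjTranspose_conjTranspose, star_eq_conjTranspose,
      Matrix.mul_assoc]
  simp only [re_trace_eq]
  rw [Matrix.mul_sum, Matrix.sum_mul]
  exact norm_sum_sq_le_card_mul_sum_norm_sq s _

end HilbertSchmidt

theorem sum_vecMulVec_star_eq_one_of_orthonormal {n R : Type*} [Fintype n] [DecidableEq n]
    [CommRing R] [StarRing R] {v : n → n → R}
    (hv : ∀ k l, star (v k) ⬝ᵥ v l = if k = l then 1 else 0) :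
    ∑ k, vecMulVec (v k) (star (v k)) = 1 := by
  have conjTranspose_mul_self : (of v)ᵀᴴ * (of v)ᵀ = 1 := by
    ext k l
    simpa [mul_apply, dotProduct, one_apply] using hv k l
  rw [← mul_eq_one_comm.mp conjTranspose_mul_self]
  ext a b
  simp [Matrix.sum_apply, mul_apply, vecMulVec_apply]

section RealPower

variable {n : Type*} [Fintype n] [DecidableEq n] {M : Matrix n n ℂ}

theorem mpow_eq_cfc (hM : M.IsHermitian) (r : ℝ) : mpow M r = cfc (fun x : ℝ => x ^ r) M := by
  rw [mpow, dif_pos hM, hM.cfc_eq]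
  rfl

theorem isHermitian_mpow (M : Matrix n n ℂ) (r : ℝ) : (mpow M r).IsHermitian := by
  by_cases hM : M.IsHermitian
  · rw [mpow_eq_cfc hM]
    exact cfc_predicate _ M
  · rw [mpow, dif_neg hM]
    exact isHermitian_zero

open scoped MatrixOrder in
theorem mpow_add (hM : M.PosDef) (r s : ℝ) : mpow M (r + s) = mpow M r * mpow M s := by
  simp only [mpow_eq_cfc hM.isHermitian, ← CFC.rpow_eq_cfc_real hM.posSemidef.nonneg]
  exact CFC.rpow_add hM.isUnit

end RealPower

section PartialTrace

variable {dA dB : ℕ} (ρ : Matrix (Fin dA × Fin dB) (Fin dA × Fin dB) ℂ)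
  (X : Matrix (Fin dB) (Fin dB) ℂ) (v : Fin dA → ℂ)

theorem trace_ptraceA : (ptraceA ρ).trace = ρ.trace := by
  simp only [trace, diag, ptraceA, of_apply, Fintype.sum_prod_type_right]

theorem ptraceA_one_kronecker_mul :
    ptraceA (((1 : Matrix (Fin dA) (Fin dA) ℂ) ⊗ₖ X) * ρ) = X * ptraceA ρ := by
  ext i j
  simp [ptraceA, mul_apply, Fintype.sum_prod_type, one_apply, Finset.mul_sum,
    Finset.sum_comm (s := Finset.univ (α := Fin dA))]

theorem ptraceA_mul_one_kronecker :
    ptraceA (ρ * ((1 : Matrix (Fin dA) (Fin dA) ℂ) ⊗ₖ X)) = ptraceA ρ * X := by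
  ext i j
  simp [ptraceA, mul_apply, Fintype.sum_prod_type, one_apply, Finset.sum_mul,
    Finset.sum_comm (s := Finset.univ (α := Fin dA))]

theorem condB_one_kronecker_mul :
    condB (((1 : Matrix (Fin dA) (Fin dA) ℂ) ⊗ₖ X) * ρ) v = X * condB ρ v := by
  rw [condB, condB, ← ptraceA_one_kronecker_mul, ← Matrix.mul_assoc, ← Matrix.mul_assoc,
    ← mul_kronecker_mul, ← mul_kronecker_mul]
  simp only [Matrix.mul_one, Matrix.one_mul]

theorem condB_mul_one_kronecker :
    condB (ρ * ((1 : Matrix (Fin dA) (Fin dA) ℂ) ⊗ₖ X)) v = condB ρ v * X := by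
  rw [condB, condB, ← ptraceA_mul_one_kronecker, Matrix.mul_assoc]

theorem vecMulVec_kronecker_one_mul_mul_self :
    (vecMulVec v (star v) ⊗ₖ (1 : Matrix (Fin dB) (Fin dB) ℂ)) * ρ *
      (vecMulVec v (star v) ⊗ₖ (1 : Matrix (Fin dB) (Fin dB) ℂ)) =
    vecMulVec v (star v) ⊗ₖ condB ρ v := by
  ext ⟨a, i⟩ ⟨b, j⟩
  simp only [condB, ptraceA, mul_apply, kroneckerMap_apply, vecMulVec_apply, of_apply, one_apply,
    Fintype.sum_prod_type, mul_ite, ite_mul, mul_one, mul_zero, zero_mul, Finset.sum_ite_eq,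
    Finset.sum_ite_eq', Finset.mem_univ, if_true, Finset.sum_mul, Finset.mul_sum]
  refine Finset.sum_congr rfl fun c _ => Finset.sum_congr rfl fun d _ => ?_
  ring

theorem trace_condB_mul_self :
    (condB ρ v * condB ρ v).trace =
      ((vecMulVec v (star v) ⊗ₖ (1 : Matrix (Fin dB) (Fin dB) ℂ)) * ρ *
        (vecMulVec v (star v) ⊗ₖ (1 : Matrix (Fin dB) (Fin dB) ℂ)) * ρ).trace := by
  rw [vecMulVec_kronecker_one_mul_mul_self, ← trace_ptraceA (_ * ρ)]
  nth_rw 2 [condB]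
  rw [← ptraceA_one_kronecker_mul, ← Matrix.mul_assoc, ← mul_kronecker_mul, Matrix.one_mul,
    Matrix.mul_one]

end PartialTrace

section PrettyGood

variable {dA dB : ℕ} {ρ : Matrix (Fin dA × Fin dB) (Fin dA × Fin dB) ℂ}

theorem posSemidef_tildeRho (hρ : ρ.PosSemidef) : (tildeRho ρ).PosSemidef := by
  simpa only [tildeRho, conjTranspose_kronecker, conjTranspose_one, (isHermitian_mpow _ _).eq] using
    hρ.mul_mul_conjTranspose_same
      ((1 : Matrix (Fin dA) (Fin dA) ℂ) ⊗ₖ mpow (ptraceA ρ) (-(1/4 : ℝ)))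

variable (ρ) in
theorem condB_tildeRho (v : Fin dA → ℂ) :
    condB (tildeRho ρ) v =
      mpow (ptraceA ρ) (-(1/4 : ℝ)) * condB ρ v * mpow (ptraceA ρ) (-(1/4 : ℝ)) := by
  rw [tildeRho, condB_mul_one_kronecker, condB_one_kronecker_mul]

theorem pgTerm_eq_trace_condB_tildeRho (hρB : (ptraceA ρ).PosDef) (v : Fin dA → ℂ) :
    pgTerm ρ v = (condB (tildeRho ρ) v * condB (tildeRho ρ) v).trace := by
  have mpow_neg_half : mpow (ptraceA ρ) (-(1/2 : ℝ)) =
      mpow (ptraceA ρ) (-(1/4 : ℝ)) * mpow (ptraceA ρ) (-(1/4 : ℝ)) := by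
    rw [← mpow_add hρB]
    norm_num
  rw [pgTerm, condB_tildeRho, mpow_neg_half, ← Matrix.mul_assoc (_ * condB ρ v * _),
    trace_mul_comm (_ * _) (mpow _ _)]
  simp only [Matrix.mul_assoc]

theorem pguess_ge_singlet_fraction_general {ι : Type*} [Fintype ι] [Nonempty ι]
    (hρ : ρ.PosSemidef) (hρB : (ptraceA ρ).PosDef) {v : ι → Fin dA → ℂ}
    (hv : ∑ k, vecMulVec (v k) (star (v k)) = 1) :
    ((Fintype.card ι : ℂ)⁻¹ * (tildeRho ρ * tildeRho ρ).trace).re ≤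
      (∑ k, pgTerm ρ (v k)).re := by
  let P (k : ι) := vecMulVec (v k) (star (v k)) ⊗ₖ (1 : Matrix (Fin dB) (Fin dB) ℂ)
  have conjTranspose_P (k : ι) : (P k)ᴴ = P k := by
    simp only [P, conjTranspose_kronecker, conjTranspose_vecMulVec, star_star, conjTranspose_one]
  have sum_P : ∑ k, P k = 1 := by
    rw [← one_kronecker_one, ← hv]
    exact (map_sum ((kroneckerBilinear (R := ℂ)).flip 1) _ _).symm
  have pgTerm_eq (k : ι) : pgTerm ρ (v k) = ((P k)ᴴ * tildeRho ρ * P k * tildeRho ρ).trace := by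
    rw [pgTerm_eq_trace_condB_tildeRho hρB, trace_condB_mul_self, conjTranspose_P]
  have purity_le : (tildeRho ρ * tildeRho ρ).trace.re ≤
      Fintype.card ι * (∑ k, pgTerm ρ (v k)).re := by
    simpa [sum_P, pgTerm_eq] using re_trace_conjTranspose_sum_mul_le_card_mul
      (posSemidef_tildeRho hρ) (posSemidef_tildeRho hρ) Finset.univ P
  rwa [← Complex.ofReal_natCast, ← Complex.ofReal_inv, Complex.re_ofReal_mul,
    inv_mul_le_iff₀ (mod_cast Fintype.card_pos)]

end PrettyGood

/-- the pretty-good guessing probability for any orthonormal basis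
measurement on `A` dominates the pretty-good singlet fraction:
`Σ_k Tr[ρ_B^{-1/2} ρ_B^k ρ_B^{-1/2} ρ_B^k] ≥ (1/d_A) Tr[ρ̃_AB²]`. -/
theorem pguess_ge_singlet_fraction
    (dA dB : ℕ) (hdA : 1 ≤ dA) (hdB : 1 ≤ dB)
    (ρ : Matrix (Fin dA × Fin dB) (Fin dA × Fin dB) ℂ)
    (hρ : ρ.PosSemidef) (hρtr : ρ.trace = 1)
    (hρB : (ptraceA ρ).PosDef)
    (v : Fin dA → (Fin dA → ℂ))
    (horth : ∀ k k', star (v k) ⬝ᵥ v k' = if k = k' then (1 : ℂ) else 0) :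
    ((dA : ℂ)⁻¹ * (tildeRho ρ * tildeRho ρ).trace).re
      ≤ (∑ k : Fin dA, pgTerm ρ (v k)).re := by
  have : Nonempty (Fin dA) := ⟨⟨0, hdA⟩⟩
  simpa using pguess_ge_singlet_fraction_general hρ hρB
    (sum_vecMulVec_star_eq_one_of_orthonormal horth)

end
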